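/- Let 0 < α < 1, κ ≥ 0 and λ ∈ ℝ with λ ≠ 0. Then Im(iλ (κ + iλ)^{α−1}) = (sin(απ)/π) · λ · ∫_ℝ |y|^{2α−1} (y²+κ) / ((y²+κ)² + λ²) dy, and in particular λ · Im(iλ (κ + iλ)^{α−1}) > 0; hence Im(iλ (κ + iλ)^{α−1}) ≠ 0. -/

import Mathlib

open MeasureTheory Real

/-!
Since `Im (iλ w) = λ Re w`, everything is about `Re (z^(α-1))` at `z = κ + iλ`. The substitution
`t = y²` turns the integral over `ℝ` into the real part of the Stieltjes transform
`∫₀^∞ t^(α-1) / (t + z) dt`, which equals `π / sin(πα) · z^(α-1)` on the whole slit plane: for real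
`z > 0` one writes `1 / (t + z)` as a Laplace integral, swaps the integrals and uses Euler's
reflection formula, and both sides are holomorphic on the slit plane. As `λ ≠ 0` keeps `z` off the
branch cut, this covers every real `κ`.

The sign comes from the polar form: `arg (z^(α-1))` is `(α-1) arg z`, which lies strictly between
`-π/2` and `π/2` as soon as `(1-α) |arg z| < π/2`.
-/

section StieltjesTransform

open Set Filter Topology
open Complex (slitPlane)

/-- The Stieltjes transform of a density `f` on the half-line `(0, ∞)`. The kernel is `1 / (t + z)`
rather than `1 / (t - z)`, so that the transform lives on `Complex.slitPlane`, the domain of the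
principal branch of the complex powers. -/
noncomputable def stieltjesTransform (f : ℝ → ℂ) (z : ℂ) : ℂ :=
  ∫ t in Ioi (0 : ℝ), f t / (t + z)

lemma exists_pos_forall_mul_add_one_le_norm_add {z : ℂ} (hz : z ∈ slitPlane) :
    ∃ c > 0, ∀ t : ℝ, 0 ≤ t → c * (t + 1) ≤ ‖(t : ℂ) + z‖ := by
  -- `(t + z) / (t + 1)` lies on the segment from `1` to `z`, a compact set avoiding `0`.
  have hzero : (0 : ℂ) ∉ segment ℝ 1 z := fun h =>
    Complex.zero_notMem_slitPlane (Complex.starConvex_one_slitPlane.segment_subset hz h)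
  have hclosed : IsClosed (segment ℝ 1 z) := by
    rw [segment_eq_image]
    exact (isCompact_Icc.image (by fun_prop)).isClosed
  refine ⟨Metric.infDist 0 (segment ℝ 1 z),
    (hclosed.notMem_iff_infDist_pos ⟨1, left_mem_segment ℝ 1 z⟩).1 hzero, fun t ht => ?_⟩
  have ht1 : 0 < t + 1 := by positivity
  have hmem : ((t + 1 : ℝ) : ℂ)⁻¹ * (t + z) ∈ segment ℝ 1 z := by
    refine ⟨t / (t + 1), 1 / (t + 1), by positivity, by positivity, by field_simp, ?_⟩
    simp only [Complex.real_smul, Complex.ofReal_div, Complex.ofReal_one]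
    ring
  calc Metric.infDist 0 (segment ℝ 1 z) * (t + 1)
      ≤ ‖((t + 1 : ℝ) : ℂ)⁻¹ * (t + z)‖ * (t + 1) := by
        gcongr
        simpa only [dist_zero_left] using Metric.infDist_le_dist_of_mem (x := 0) hmem
    _ = ‖(t : ℂ) + z‖ := by
        rw [norm_mul, norm_inv, Complex.norm_of_nonneg ht1.le]
        field_simp

lemma exists_pos_eventually_forall_mul_add_one_le_norm_add {z : ℂ} (hz : z ∈ slitPlane) :
    ∃ c > 0, ∀ᶠ w in 𝓝 z, ∀ t : ℝ, 0 ≤ t → c * (t + 1) ≤ ‖(t : ℂ) + w‖ := by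
  obtain ⟨c, hc, hle⟩ := exists_pos_forall_mul_add_one_le_norm_add hz
  refine ⟨c / 2, half_pos hc, ?_⟩
  filter_upwards [Metric.ball_mem_nhds z (half_pos hc)] with w hw t ht
  have hzw : ‖(t : ℂ) + z‖ ≤ ‖(t : ℂ) + w‖ + ‖w - z‖ := by
    rw [show (t : ℂ) + z = t + w - (w - z) by ring]
    exact norm_sub_le _ _
  have hdist : ‖w - z‖ < c / 2 := by simpa [dist_eq_norm] using hw
  nlinarith [hle t ht]

lemma norm_ofReal_add_one {t : ℝ} (ht : 0 ≤ t) : ‖(t : ℂ) + 1‖ = t + 1 := by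
  exact_mod_cast Complex.norm_of_nonneg (add_nonneg ht zero_le_one)

variable {f : ℝ → ℂ} {z : ℂ}

lemma aestronglyMeasurable_of_integrableOn_div_add_one
    (hf : IntegrableOn (fun t : ℝ => f t / (t + 1)) (Ioi 0)) :
    AEStronglyMeasurable f (volume.restrict (Ioi 0)) := by
  have hmul : AEStronglyMeasurable (fun t : ℝ => f t / (t + 1) * (t + 1))
      (volume.restrict (Ioi 0)) := hf.aestronglyMeasurable.mul (by fun_prop)
  refine hmul.congr ?_
  filter_upwards [ae_restrict_mem measurableSet_Ioi] with t ht
  have ht1 : (t : ℂ) + 1 ≠ 0 := by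
    exact_mod_cast (add_pos ht one_pos).ne'
  exact div_mul_cancel₀ _ ht1

lemma integrableOn_div_add_of_mem_slitPlane
    (hf : IntegrableOn (fun t : ℝ => f t / (t + 1)) (Ioi 0)) (hz : z ∈ slitPlane) :
    IntegrableOn (fun t : ℝ => f t / (t + z)) (Ioi 0) := by
  obtain ⟨c, hc, hle⟩ := exists_pos_forall_mul_add_one_le_norm_add hz
  refine (hf.norm.const_mul c⁻¹).mono'
    ((aestronglyMeasurable_of_integrableOn_div_add_one hf).div₀ (by fun_prop)) ?_
  filter_upwards [ae_restrict_mem measurableSet_Ioi] with t ht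
  have ht0 : 0 < t := ht
  calc ‖f t / (t + z)‖ = ‖f t‖ / ‖(t : ℂ) + z‖ := norm_div _ _
    _ ≤ ‖f t‖ / (c * (t + 1)) := by gcongr; exact hle t ht0.le
    _ = c⁻¹ * ‖f t / (t + 1)‖ := by rw [norm_div, norm_ofReal_add_one ht0.le]; field_simp

lemma differentiableAt_stieltjesTransform
    (hf : IntegrableOn (fun t : ℝ => f t / (t + 1)) (Ioi 0)) (hz : z ∈ slitPlane) :
    DifferentiableAt ℂ (stieltjesTransform f) z := by
  obtain ⟨c, hc, hle⟩ := exists_pos_eventually_forall_mul_add_one_le_norm_add hz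
  have hmeas := aestronglyMeasurable_of_integrableOn_div_add_one hf
  refine (hasDerivAt_integral_of_dominated_loc_of_deriv_le (μ := volume.restrict (Ioi 0))
    (F := fun w t => f t / (t + w)) (F' := fun w t => -(f t / (t + w) ^ 2))
    (bound := fun t => (c ^ 2)⁻¹ * ‖f t / (t + 1)‖) hle
    (Eventually.of_forall fun w => hmeas.div₀ (by fun_prop))
    (integrableOn_div_add_of_mem_slitPlane hf hz) (hmeas.div₀ (by fun_prop)).neg ?_
    (hf.norm.const_mul _) ?_).2.differentiableAt
  all_goals
    filter_upwards [ae_restrict_mem measurableSet_Ioi] with t ht w hw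
    have ht0 : 0 < t := ht
    have hwt : c * (t + 1) ≤ ‖(t : ℂ) + w‖ := hw t ht0.le
  · calc ‖-(f t / (t + w) ^ 2)‖ = ‖f t‖ / ‖(t : ℂ) + w‖ ^ 2 := by
          rw [norm_neg, norm_div, norm_pow]
      _ ≤ ‖f t‖ / (c ^ 2 * (t + 1)) := by
          gcongr
          calc c ^ 2 * (t + 1) ≤ (c * (t + 1)) ^ 2 := by
                nlinarith [mul_pos (pow_pos hc 2) (mul_pos ht0 (by positivity : 0 < t + 1))]
            _ ≤ ‖(t : ℂ) + w‖ ^ 2 := by gcongr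
      _ = (c ^ 2)⁻¹ * ‖f t / (t + 1)‖ := by rw [norm_div, norm_ofReal_add_one ht0.le]; field_simp
  · have hne : (t : ℂ) + w ≠ 0 := norm_pos_iff.1 (lt_of_lt_of_le (by positivity) hwt)
    simpa [div_eq_mul_inv] using (((hasDerivAt_id w).const_add (t : ℂ)).inv hne).const_mul (f t)

end StieltjesTransform

section Power

open Set Filter Topology
open Complex (slitPlane)

lemma eqOn_slitPlane_of_eqOn_ofReal {E : Type*} [NormedAddCommGroup E] [NormedSpace ℂ E]
    [CompleteSpace E] {f g : ℂ → E} (hf : DifferentiableOn ℂ f slitPlane)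
    (hg : DifferentiableOn ℂ g slitPlane) (hfg : ∀ x : ℝ, 0 < x → f x = g x) :
    EqOn f g slitPlane := by
  refine (hf.analyticOnNhd Complex.isOpen_slitPlane).eqOn_of_preconnected_of_frequently_eq
    (hg.analyticOnNhd Complex.isOpen_slitPlane)
    (Complex.starConvex_one_slitPlane.isPathConnected
      Complex.one_mem_slitPlane).isConnected.isPreconnected
    Complex.one_mem_slitPlane ?_
  have htendsto : Tendsto ((↑) : ℝ → ℂ) (𝓝[≠] 1) (𝓝[≠] 1) := by
    simpa using Complex.continuous_ofReal.continuousWithinAt.tendsto_nhdsWithin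
      (s := {(1 : ℝ)}ᶜ) (t := {(1 : ℂ)}ᶜ) (x := 1) (fun x hx => by simpa using hx)
  refine htendsto.frequently (Eventually.frequently ?_)
  filter_upwards [nhdsWithin_le_nhds (lt_mem_nhds one_pos)] with x hx using hfg x hx

lemma integrableOn_rpow_div_add {α x : ℝ} (hα0 : 0 < α) (hα1 : α < 1) (hx : 0 < x) :
    IntegrableOn (fun t : ℝ => t ^ (α - 1) / (t + x)) (Ioi 0) := by
  have h := (integrableOn_rpowIntegrand₀₁_Ioi ⟨hα0, hα1⟩ hx.le).congr_fun
    (rpowIntegrand₀₁_eqOn_pow_div ⟨hα0, hα1⟩ hx.le) measurableSet_Ioi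
  refine IntegrableOn.congr_fun (h.const_mul x⁻¹) (fun t _ => ?_) measurableSet_Ioi
  field_simp

variable {a : ℂ}

lemma integrableOn_cpow_div_add_one (ha0 : 0 < a.re) (ha1 : a.re < 1) :
    IntegrableOn (fun t : ℝ => (t : ℂ) ^ (a - 1) / (t + 1)) (Ioi 0) := by
  refine (integrableOn_rpow_div_add ha0 ha1 one_pos).mono'
    (Measurable.aestronglyMeasurable (by fun_prop)) ?_
  filter_upwards [ae_restrict_mem measurableSet_Ioi] with t ht
  rw [norm_div, norm_ofReal_add_one (le_of_lt ht), Complex.norm_cpow_eq_rpow_re_of_pos ht,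
    Complex.sub_re, Complex.one_re]

lemma integrable_cpow_mul_exp_neg_add_mul {x : ℝ} (ha0 : 0 < a.re) (ha1 : a.re < 1)
    (hx : 0 < x) :
    Integrable (Function.uncurry fun t s : ℝ => (t : ℂ) ^ (a - 1) * Complex.exp (-(t + x) * s))
      ((volume.restrict (Ioi 0)).prod (volume.restrict (Ioi 0))) := by
  rw [integrable_prod_iff (Measurable.aestronglyMeasurable (by unfold Function.uncurry; fun_prop))]
  constructor
  · filter_upwards [ae_restrict_mem measurableSet_Ioi] with t ht
    have hneg : (-((t : ℂ) + x)).re < 0 := by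
      simpa [neg_lt_iff_pos_add] using add_pos ht hx
    exact (integrableOn_exp_mul_complex_Ioi hneg 0).const_mul ((t : ℂ) ^ (a - 1))
  · refine (integrableOn_rpow_div_add ha0 ha1 hx).congr_fun (fun t ht => ?_) measurableSet_Ioi
    have hneg : -(t + x) < 0 := neg_neg_of_pos (add_pos ht hx)
    have hnorm (s : ℝ) : ‖(t : ℂ) ^ (a - 1) * Complex.exp (-(t + x) * s)‖
        = t ^ (a.re - 1) * rexp (-(t + x) * s) := by
      rw [norm_mul, Complex.norm_cpow_eq_rpow_re_of_pos ht, Complex.norm_exp]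
      simp
    simp only [Function.uncurry, hnorm]
    rw [integral_const_mul, integral_exp_mul_Ioi hneg, mul_zero, Real.exp_zero, neg_div_neg_eq,
      mul_one_div]

lemma integral_cpow_mul_exp_neg_mul_eq_Gamma_mul_cpow_neg {r : ℝ} (ha : 0 < a.re) (hr : 0 < r) :
    ∫ t in Ioi (0 : ℝ), (t : ℂ) ^ (a - 1) * Complex.exp (-(r * t))
      = Complex.Gamma a * (r : ℂ) ^ (-a) := by
  have harg : (r : ℂ).arg ≠ π := Complex.arg_ofReal_of_nonneg hr.le ▸ pi_ne_zero.symm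
  rw [Complex.integral_cpow_mul_exp_neg_mul_Ioi ha hr, one_div, Complex.inv_cpow _ _ harg,
    Complex.cpow_neg, mul_comm]

lemma integral_exp_neg_mul_eq_one_div {w : ℂ} (hw : 0 < w.re) :
    ∫ s in Ioi (0 : ℝ), Complex.exp (-w * s) = 1 / w := by
  simpa using integral_exp_mul_complex_Ioi (a := -w) (by simpa using hw) 0

lemma stieltjesTransform_cpow_ofReal {x : ℝ} (ha0 : 0 < a.re) (ha1 : a.re < 1) (hx : 0 < x) :
    stieltjesTransform (fun t => (t : ℂ) ^ (a - 1)) x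
      = π / Complex.sin (π * a) * (x : ℂ) ^ (a - 1) := by
  have hlaplace : ∀ t ∈ Ioi (0 : ℝ), (t : ℂ) ^ (a - 1) / (t + x)
      = ∫ s in Ioi (0 : ℝ), (t : ℂ) ^ (a - 1) * Complex.exp (-(t + x) * s) := fun t ht => by
    have hre : 0 < ((t : ℂ) + x).re := by simpa using add_pos ht hx
    rw [integral_const_mul, integral_exp_neg_mul_eq_one_div hre, mul_one_div]
  have hgamma : ∀ s ∈ Ioi (0 : ℝ),
      ∫ t in Ioi (0 : ℝ), (t : ℂ) ^ (a - 1) * Complex.exp (-(t + x) * s)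
        = Complex.Gamma a * ((s : ℂ) ^ ((1 - a) - 1) * Complex.exp (-(x * s))) := fun s hs => by
    have hsplit (t : ℝ) : (t : ℂ) ^ (a - 1) * Complex.exp (-(t + x) * s)
        = (t : ℂ) ^ (a - 1) * Complex.exp (-(s * t)) * Complex.exp (-(x * s)) := by
      rw [mul_assoc, ← Complex.exp_add]
      ring_nf
    simp only [hsplit]
    rw [integral_mul_const, integral_cpow_mul_exp_neg_mul_eq_Gamma_mul_cpow_neg ha0 hs,
      sub_sub_cancel_left, mul_assoc]
  calc stieltjesTransform (fun t => (t : ℂ) ^ (a - 1)) x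
      = ∫ t in Ioi (0 : ℝ), ∫ s in Ioi (0 : ℝ), (t : ℂ) ^ (a - 1) * Complex.exp (-(t + x) * s) :=
        setIntegral_congr_fun measurableSet_Ioi hlaplace
    _ = ∫ s in Ioi (0 : ℝ), ∫ t in Ioi (0 : ℝ), (t : ℂ) ^ (a - 1) * Complex.exp (-(t + x) * s) :=
        integral_integral_swap (integrable_cpow_mul_exp_neg_add_mul ha0 ha1 hx)
    _ = ∫ s in Ioi (0 : ℝ),
          Complex.Gamma a * ((s : ℂ) ^ ((1 - a) - 1) * Complex.exp (-(x * s))) :=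
        setIntegral_congr_fun measurableSet_Ioi hgamma
    _ = Complex.Gamma a * Complex.Gamma (1 - a) * (x : ℂ) ^ (a - 1) := by
        rw [integral_const_mul, integral_cpow_mul_exp_neg_mul_eq_Gamma_mul_cpow_neg
          (by simpa using ha1) hx, neg_sub, mul_assoc]
    _ = π / Complex.sin (π * a) * (x : ℂ) ^ (a - 1) := by rw [Complex.Gamma_mul_Gamma_one_sub]

theorem stieltjesTransform_cpow {z : ℂ} (ha0 : 0 < a.re) (ha1 : a.re < 1) (hz : z ∈ slitPlane) :
    stieltjesTransform (fun t => (t : ℂ) ^ (a - 1)) z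
      = π / Complex.sin (π * a) * z ^ (a - 1) := by
  refine eqOn_slitPlane_of_eqOn_ofReal
    (g := fun w => π / Complex.sin (π * a) * w ^ (a - 1)) (fun w hw => ?_) (fun w hw => ?_)
    (fun x hx => stieltjesTransform_cpow_ofReal ha0 ha1 hx) hz
  · exact (differentiableAt_stieltjesTransform
      (integrableOn_cpow_div_add_one ha0 ha1) hw).differentiableWithinAt
  · exact ((differentiableAt_id.cpow_const hw).const_mul _).differentiableWithinAt

lemma integral_rpow_mul_div_eq_re_cpow {α : ℝ} {z : ℂ} (hα0 : 0 < α) (hα1 : α < 1)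
    (hz : z ∈ slitPlane) :
    ∫ t in Ioi (0 : ℝ), t ^ (α - 1) * ((t + z.re) / ((t + z.re) ^ 2 + z.im ^ 2))
      = π / sin (π * α) * (z ^ ((α : ℂ) - 1)).re := by
  have hre : ∀ t ∈ Ioi (0 : ℝ), t ^ (α - 1) * ((t + z.re) / ((t + z.re) ^ 2 + z.im ^ 2))
      = ((t : ℂ) ^ ((α : ℂ) - 1) / (t + z)).re := fun t ht => by
    have hpow : (t : ℂ) ^ ((α : ℂ) - 1) = ((t ^ (α - 1) : ℝ) : ℂ) := by
      simp [Complex.ofReal_cpow (le_of_lt ht)]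
    rw [hpow, div_eq_mul_inv (_ : ℂ), Complex.re_ofReal_mul, Complex.inv_re, Complex.normSq_apply]
    simp [pow_two]
  have hconst : π / Complex.sin (π * α) = ((π / sin (π * α) : ℝ) : ℂ) := by push_cast; rfl
  calc ∫ t in Ioi (0 : ℝ), t ^ (α - 1) * ((t + z.re) / ((t + z.re) ^ 2 + z.im ^ 2))
      = ∫ t in Ioi (0 : ℝ), ((t : ℂ) ^ ((α : ℂ) - 1) / (t + z)).re :=
        setIntegral_congr_fun measurableSet_Ioi hre
    _ = (stieltjesTransform (fun t => (t : ℂ) ^ ((α : ℂ) - 1)) z).re :=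
        integral_re (integrableOn_div_add_of_mem_slitPlane
          (integrableOn_cpow_div_add_one (a := α) hα0 hα1) hz)
    _ = π / sin (π * α) * (z ^ ((α : ℂ) - 1)).re := by
        rw [stieltjesTransform_cpow (a := α) hα0 hα1 hz, hconst, Complex.re_ofReal_mul]

lemma integral_abs_rpow_mul_comp_sq (α : ℝ) (g : ℝ → ℝ) :
    ∫ y : ℝ, |y| ^ (2 * α - 1) * g (y ^ 2) = ∫ t in Ioi (0 : ℝ), t ^ (α - 1) * g t := by
  have heven := integral_comp_abs (f := fun y : ℝ => y ^ (2 * α - 1) * g (y ^ 2))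
  simp only [sq_abs] at heven
  rw [heven, ← integral_comp_rpow_Ioi_of_pos (g := fun t => t ^ (α - 1) * g t) two_pos,
    ← integral_const_mul]
  refine setIntegral_congr_fun measurableSet_Ioi fun y hy => ?_
  have hpow : y ^ (2 * α - 1) = y ^ (2 - 1 : ℝ) * (y ^ (2 : ℝ)) ^ (α - 1) := by
    rw [← rpow_mul (le_of_lt hy), ← rpow_add hy]
    ring_nf
  simp only [smul_eq_mul, hpow, rpow_two]
  ring

lemma re_cpow_ofReal_pos {z : ℂ} {s : ℝ} (hz : z ≠ 0) (h : |z.arg * s| < π / 2) :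
    0 < (z ^ (s : ℂ)).re := by
  rw [Complex.cpow_ofReal_re]
  exact mul_pos (rpow_pos_of_pos (norm_pos_iff.2 hz) s) (cos_pos_of_mem_Ioo (abs_lt.1 h))

lemma abs_arg_mul_lt_pi_div_two {z : ℂ} {s : ℝ} (hz : 0 ≤ z.re) (hs0 : 0 ≤ s) (hs1 : s < 1) :
    |z.arg| * s < π / 2 :=
  calc |z.arg| * s ≤ π / 2 * s := by gcongr; exact Complex.abs_arg_le_pi_div_two_iff.2 hz
    _ < π / 2 := mul_lt_of_lt_one_right pi_div_two_pos hs1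

end Power

theorem stmt7_general (α κ lam : ℝ) (hα0 : 0 < α) (hα1 : α < 1) (hlam : lam ≠ 0)
    (harg : |((κ : ℂ) + Complex.I * (lam : ℂ)).arg| * (1 - α) < π / 2) :
    (Complex.I * (lam : ℂ) * ((κ : ℂ) + Complex.I * (lam : ℂ)) ^ ((α : ℂ) - 1)).im =
      (Real.sin (α * π) / π) * lam *
        ∫ y : ℝ, |y| ^ (2 * α - 1) * (y ^ 2 + κ) / ((y ^ 2 + κ) ^ 2 + lam ^ 2) ∧
    0 < lam * (Complex.I * (lam : ℂ) * ((κ : ℂ) + Complex.I * (lam : ℂ)) ^ ((α : ℂ) - 1)).im ∧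
    (Complex.I * (lam : ℂ) * ((κ : ℂ) + Complex.I * (lam : ℂ)) ^ ((α : ℂ) - 1)).im ≠ 0 := by
  set z : ℂ := κ + Complex.I * lam with hz
  have hslit : z ∈ Complex.slitPlane := Or.inr (by simpa [hz] using hlam)
  have him : (Complex.I * lam * z ^ ((α : ℂ) - 1)).im = lam * (z ^ ((α : ℂ) - 1)).re := by
    simp [Complex.mul_im]
  have hre : 0 < (z ^ ((α : ℂ) - 1)).re := by
    have habs : |z.arg * (α - 1)| < π / 2 := by
      rwa [abs_mul, abs_sub_comm, abs_of_pos (sub_pos.2 hα1)]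
    simpa using re_cpow_ofReal_pos (Complex.slitPlane_ne_zero hslit) habs
  have hint : ∫ y : ℝ, |y| ^ (2 * α - 1) * (y ^ 2 + κ) / ((y ^ 2 + κ) ^ 2 + lam ^ 2)
      = π / sin (α * π) * (z ^ ((α : ℂ) - 1)).re := by
    simp only [mul_div_assoc]
    rw [integral_abs_rpow_mul_comp_sq α fun t => (t + κ) / ((t + κ) ^ 2 + lam ^ 2), mul_comm α π]
    simpa [hz] using integral_rpow_mul_div_eq_re_cpow hα0 hα1 hslit
  have hsin : 0 < sin (α * π) :=
    sin_pos_of_pos_of_lt_pi (by positivity) (mul_lt_of_lt_one_left pi_pos hα1)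
  rw [him, hint]
  refine ⟨by field_simp, ?_, mul_ne_zero hlam hre.ne'⟩
  rw [← mul_assoc]
  exact mul_pos (mul_self_pos.2 hlam) hre

/-- the imaginary part of the fractional damping symbol:
`Im(iλ (κ + iλ)^(α-1)) = (sin(απ)/π) λ ∫_ℝ |y|^(2α-1)(y²+κ)/((y²+κ)²+λ²) dy`,
`λ · Im(...) > 0`, hence `Im(...) ≠ 0`. -/
theorem stmt7 (α κ lam : ℝ) (hα0 : 0 < α) (hα1 : α < 1) (hκ : 0 ≤ κ) (hlam : lam ≠ 0) :
    (Complex.I * (lam : ℂ) * ((κ : ℂ) + Complex.I * (lam : ℂ)) ^ ((α : ℂ) - 1)).im =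
      (Real.sin (α * π) / π) * lam *
        ∫ y : ℝ, |y| ^ (2 * α - 1) * (y ^ 2 + κ) / ((y ^ 2 + κ) ^ 2 + lam ^ 2) ∧
    0 < lam * (Complex.I * (lam : ℂ) * ((κ : ℂ) + Complex.I * (lam : ℂ)) ^ ((α : ℂ) - 1)).im ∧
    (Complex.I * (lam : ℂ) * ((κ : ℂ) + Complex.I * (lam : ℂ)) ^ ((α : ℂ) - 1)).im ≠ 0 :=
  stmt7_general α κ lam hα0 hα1 hlam
    (abs_arg_mul_lt_pi_div_two (by simpa using hκ) (sub_nonneg.2 hα1.le) (sub_lt_self 1 hα0))
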